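/- Let K^{BTBM}_t(x) = 2∫₀^∞ (2πs)^{−d/2} e^{−|x|²/(2s)} (2πt)^{−1/2} e^{−s²/(2t)} ds. Then for d = 1, 2, 3 there exists a constant C = C(d) ∈ (0, ∞) such that ∫_{ℝ^d} [K^{BTBM}_t(x)]² dx = C t^{−d/4} for all t > 0. -/

import Mathlib

open Real MeasureTheory Set

noncomputable def heatK (d : ℕ) (s : ℝ) (x : EuclideanSpace ℝ (Fin d)) : ℝ :=
  (2 * π * s) ^ (-(d : ℝ)/2) * Real.exp (-‖x‖^2 / (2*s))

noncomputable def btbmK (d : ℕ) (t : ℝ) (x : EuclideanSpace ℝ (Fin d)) : ℝ :=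
  2 * ∫ s in Ioi (0:ℝ),
      heatK d s x * ((2 * π * t) ^ (-(1:ℝ)/2) * Real.exp (-s^2 / (2*t)))

/-!
Brownian scaling of the two Gaussian kernels gives `btbmK d (a⁴ t) (a x) = a⁻ᵈ btbmK d t x`, so
the squared `L²` norm is homogeneous of degree `-d/4` in `t`, and what remains is to see that it
is positive and finite. By Minkowski's integral inequality the `L²` norm of the mixture is at most
the mixture of the norms `‖heatK d s‖₂ = (4πs)^(-d/4)`, which is integrable at `s = 0` exactly
when `d < 4`.
-/

section Minkowski

open scoped ENNReal
open Function (uncurry)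

variable {α β : Type*} [MeasurableSpace α] [MeasurableSpace β] {μ : Measure α} {ν : Measure β}

theorem eLpNorm_two_sq {ε : Type*} [ENorm ε] (f : α → ε) :
    eLpNorm f 2 μ ^ 2 = ∫⁻ x, ‖f x‖ₑ ^ 2 ∂μ := by
  have h := eLpNorm_nnreal_pow_eq_lintegral (μ := μ) (f := f) (two_ne_zero (α := NNReal))
  simpa only [ENNReal.coe_ofNat, NNReal.coe_ofNat, ENNReal.rpow_two] using h

theorem lintegral_mul_le_eLpNorm_two_mul_eLpNorm_two {f g : α → ℝ≥0∞} (hf : AEMeasurable f μ)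
    (hg : AEMeasurable g μ) : ∫⁻ x, f x * g x ∂μ ≤ eLpNorm f 2 μ * eLpNorm g 2 μ := by
  simpa only [eLpNorm_eq_lintegral_rpow_enorm_toReal two_ne_zero ENNReal.ofNat_ne_top,
    ENNReal.toReal_ofNat, enorm_eq_self, Pi.mul_apply]
    using ENNReal.lintegral_mul_le_Lp_mul_Lq μ Real.HolderConjugate.two_two hf hg

theorem measurable_eLpNorm_prod_left [SFinite μ] {p : ℝ≥0∞} (hp0 : p ≠ 0) (hp : p ≠ ∞)
    {f : α → β → ℝ≥0∞} (hf : Measurable (uncurry f)) : Measurable fun y => eLpNorm (f · y) p μ := by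
  simp only [eLpNorm_eq_lintegral_rpow_enorm_toReal hp0 hp]
  exact (hf.enorm.pow_const _).lintegral_prod_left'.pow_const _

theorem eLpNorm_two_lintegral_le [SFinite μ] [SFinite ν] {f : α → β → ℝ≥0∞}
    (hf : Measurable (uncurry f)) :
    eLpNorm (fun x => ∫⁻ y, f x y ∂ν) 2 μ ≤ ∫⁻ y, eLpNorm (f · y) 2 μ ∂ν := by
  have hfx (x : α) : Measurable (f x) := hf.of_uncurry_left
  have hfy (y : β) : Measurable (f · y) := hf.of_uncurry_right
  have hN := measurable_eLpNorm_prod_left (μ := μ) two_ne_zero ENNReal.ofNat_ne_top hf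
  rw [← ENNReal.pow_le_pow_left_iff two_ne_zero, eLpNorm_two_sq]
  simp only [enorm_eq_self]
  calc ∫⁻ x, (∫⁻ y, f x y ∂ν) ^ 2 ∂μ
      = ∫⁻ x, ∫⁻ p, f x p.1 * f x p.2 ∂ν.prod ν ∂μ := by
        simp only [sq, lintegral_prod_mul (hfx _).aemeasurable (hfx _).aemeasurable]
    _ = ∫⁻ p, ∫⁻ x, f x p.1 * f x p.2 ∂μ ∂ν.prod ν :=
        lintegral_lintegral_swap <| Measurable.aemeasurable <|
          (hf.comp (measurable_fst.prodMk measurable_snd.fst)).mul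
            (hf.comp (measurable_fst.prodMk measurable_snd.snd))
    _ ≤ ∫⁻ p, eLpNorm (f · p.1) 2 μ * eLpNorm (f · p.2) 2 μ ∂ν.prod ν :=
        lintegral_mono fun p => lintegral_mul_le_eLpNorm_two_mul_eLpNorm_two
          (hfy p.1).aemeasurable (hfy p.2).aemeasurable
    _ = (∫⁻ y, eLpNorm (f · y) 2 μ ∂ν) ^ 2 := by
        rw [lintegral_prod_mul hN.aemeasurable hN.aemeasurable, sq]

variable {E : Type*} [NormedAddCommGroup E] [SFinite μ] [SFinite ν] {f : α → β → E}

theorem eLpNorm_two_lintegral_enorm_le (hf : StronglyMeasurable (uncurry f)) :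
    eLpNorm (fun x => ∫⁻ y, ‖f x y‖ₑ ∂ν) 2 μ ≤ ∫⁻ y, eLpNorm (f · y) 2 μ ∂ν := by
  simpa only [eLpNorm_enorm] using eLpNorm_two_lintegral_le (f := fun x y => ‖f x y‖ₑ) hf.enorm

theorem memLp_two_integral_prod_right [NormedSpace ℝ E] (hf : StronglyMeasurable (uncurry f))
    (h : ∫⁻ y, eLpNorm (f · y) 2 μ ∂ν < ∞) : MemLp (fun x => ∫ y, f x y ∂ν) 2 μ := by
  refine ⟨hf.integral_prod_right.aestronglyMeasurable, ?_⟩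
  calc eLpNorm (fun x => ∫ y, f x y ∂ν) 2 μ
      ≤ eLpNorm (fun x => ∫⁻ y, ‖f x y‖ₑ ∂ν) 2 μ :=
        eLpNorm_mono_enorm fun _ => enorm_integral_le_lintegral_enorm _
    _ ≤ ∫⁻ y, eLpNorm (f · y) 2 μ ∂ν := eLpNorm_two_lintegral_enorm_le hf
    _ < ∞ := h

theorem ae_integrable_of_lintegral_eLpNorm_two_lt_top (hf : StronglyMeasurable (uncurry f))
    (h : ∫⁻ y, eLpNorm (f · y) 2 μ ∂ν < ∞) : ∀ᵐ x ∂μ, Integrable (f x) ν := by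
  have hmeas : Measurable fun x => ∫⁻ y, ‖f x y‖ₑ ∂ν := hf.enorm.lintegral_prod_right'
  have hfin : ∫⁻ x, (∫⁻ y, ‖f x y‖ₑ ∂ν) ^ 2 ∂μ < ∞ := by
    have hsq := eLpNorm_two_sq (μ := μ) fun x => ∫⁻ y, ‖f x y‖ₑ ∂ν
    simp only [enorm_eq_self] at hsq
    rw [← hsq]
    exact ENNReal.pow_lt_top ((eLpNorm_two_lintegral_enorm_le hf).trans_lt h)
  filter_upwards [ae_lt_top (hmeas.pow_const 2) hfin.ne] with x hx
  exact ⟨hf.of_uncurry_left.aestronglyMeasurable, (ENNReal.pow_lt_top_iff.1 hx).resolve_right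
    two_ne_zero⟩

end Minkowski

theorem integral_pos_of_ae_pos {α : Type*} [MeasurableSpace α] {μ : Measure α} [NeZero μ]
    {f : α → ℝ} (hf : Integrable f μ) (hpos : ∀ᵐ x ∂μ, 0 < f x) : 0 < ∫ x, f x ∂μ := by
  have hsupport : Function.support f =ᵐ[μ] univ :=
    Filter.eventuallyEq_univ.2 (hpos.mono fun _ => ne_of_gt)
  rw [integral_pos_iff_support_of_nonneg_ae (hpos.mono fun _ => le_of_lt) hf,
    measure_congr hsupport]
  exact Measure.measure_univ_pos.2 (NeZero.ne μ)

theorem pow_rpow_neg_natCast_div {a : ℝ} (ha : 0 ≤ a) {m : ℕ} (hm : m ≠ 0) (n : ℕ) :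
    (a ^ m) ^ (-(n : ℝ) / m) = (a ^ n)⁻¹ := by
  rw [← rpow_natCast_mul ha, mul_div_cancel₀ _ (Nat.cast_ne_zero.2 hm), rpow_neg ha, rpow_natCast]

section Kernels

variable {d : ℕ} {a s t : ℝ}

/-- The Gaussian density at time `t` of a one-dimensional Brownian motion `B`; the random time
`|B t|` at which `btbmK` evaluates the heat kernel has density `2 * brownianTimeDensity t` on
`(0, ∞)`. -/
noncomputable def brownianTimeDensity (t s : ℝ) : ℝ :=
  (2 * π * t) ^ (-(1 : ℝ) / 2) * exp (-s ^ 2 / (2 * t))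

theorem btbmK_eq_integral (d : ℕ) (t : ℝ) (x : EuclideanSpace ℝ (Fin d)) :
    btbmK d t x = 2 * ∫ s in Ioi 0, heatK d s x * brownianTimeDensity t s :=
  rfl

theorem heatK_pos (hs : 0 < s) (x : EuclideanSpace ℝ (Fin d)) : 0 < heatK d s x := by
  unfold heatK
  positivity

theorem brownianTimeDensity_pos (ht : 0 < t) (s : ℝ) : 0 < brownianTimeDensity t s := by
  unfold brownianTimeDensity
  positivity

theorem heatK_sq_mul_smul (ha : 0 < a) (hs : 0 ≤ s) (x : EuclideanSpace ℝ (Fin d)) :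
    heatK d (a ^ 2 * s) (a • x) = (a ^ d)⁻¹ * heatK d s x := by
  have hpow : (a ^ 2) ^ (-(d : ℝ) / 2) = (a ^ d)⁻¹ :=
    mod_cast pow_rpow_neg_natCast_div ha.le two_ne_zero d
  have hexp : -‖a • x‖ ^ 2 / (2 * (a ^ 2 * s)) = -‖x‖ ^ 2 / (2 * s) := by
    rw [norm_smul, Real.norm_of_nonneg ha.le]
    field_simp
  rw [heatK, heatK, hexp, mul_left_comm (2 * π), mul_rpow (by positivity) (by positivity), hpow,
    mul_assoc]

theorem brownianTimeDensity_sq_mul_mul (ha : 0 < a) (ht : 0 ≤ t) (s : ℝ) :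
    brownianTimeDensity (a ^ 2 * t) (a * s) = a⁻¹ * brownianTimeDensity t s := by
  have hpow : (a ^ 2) ^ (-(1 : ℝ) / 2) = a⁻¹ := by
    simpa using pow_rpow_neg_natCast_div ha.le two_ne_zero 1
  have hexp : -(a * s) ^ 2 / (2 * (a ^ 2 * t)) = -s ^ 2 / (2 * t) := by
    field_simp
  rw [brownianTimeDensity, brownianTimeDensity, hexp, mul_left_comm (2 * π),
    mul_rpow (by positivity) (by positivity), hpow, mul_assoc]

theorem btbmK_pow_four_mul_smul (ha : 0 < a) (ht : 0 ≤ t) (x : EuclideanSpace ℝ (Fin d)) :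
    btbmK d (a ^ 4 * t) (a • x) = (a ^ d)⁻¹ * btbmK d t x := by
  have hsubst := integral_comp_mul_left_Ioi'
    (fun s => heatK d s (a • x) * brownianTimeDensity (a ^ 4 * t) s) 0 (pow_pos ha 2)
  rw [mul_zero] at hsubst
  rw [btbmK_eq_integral, btbmK_eq_integral, ← hsubst, smul_eq_mul, mul_left_comm _ (2 : ℝ),
    ← integral_const_mul (a ^ 2), ← integral_const_mul (a ^ d)⁻¹]
  congr 1
  refine setIntegral_congr_fun measurableSet_Ioi fun s (hs : 0 < s) => ?_
  have htime : brownianTimeDensity (a ^ 4 * t) (a ^ 2 * s) =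
      (a ^ 2)⁻¹ * brownianTimeDensity t s := by
    rw [← brownianTimeDensity_sq_mul_mul (pow_pos ha 2) ht s, ← pow_mul]
  simp only [heatK_sq_mul_smul ha hs.le, htime]
  field_simp

theorem integral_btbmK_sq_eq (d : ℕ) (ht : 0 < t) :
    ∫ x, btbmK d t x ^ 2 = (∫ x, btbmK d 1 x ^ 2) * t ^ (-(d : ℝ) / 4) := by
  obtain ⟨a, ha, rfl⟩ : ∃ a : ℝ, 0 < a ∧ a ^ 4 = t :=
    ⟨t ^ (4⁻¹ : ℝ), by positivity, rpow_inv_natCast_pow ht.le four_ne_zero⟩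
  have hpow : (a ^ 4) ^ (-(d : ℝ) / 4) = (a ^ d)⁻¹ :=
    mod_cast pow_rpow_neg_natCast_div ha.le four_ne_zero d
  have hscale (x : EuclideanSpace ℝ (Fin d)) :
      btbmK d (a ^ 4) (a • x) = (a ^ d)⁻¹ * btbmK d 1 x := by
    simpa only [mul_one] using btbmK_pow_four_mul_smul ha zero_le_one x
  have hsubst := Measure.integral_comp_smul_of_nonneg volume
    (fun x : EuclideanSpace ℝ (Fin d) => btbmK d (a ^ 4) x ^ 2) a (hR := ha.le)
  simp only [hscale, mul_pow, integral_const_mul, finrank_euclideanSpace_fin, smul_eq_mul]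
    at hsubst
  rw [hpow]
  field_simp at hsubst ⊢
  linarith

theorem measurable_heatK_uncurry (d : ℕ) :
    Measurable fun p : EuclideanSpace ℝ (Fin d) × ℝ => heatK d p.2 p.1 := by
  unfold heatK
  fun_prop

theorem measurable_brownianTimeDensity (t : ℝ) : Measurable (brownianTimeDensity t) := by
  unfold brownianTimeDensity
  fun_prop

theorem heatK_sq (hs : 0 < s) (x : EuclideanSpace ℝ (Fin d)) :
    heatK d s x ^ 2 = (2 * π * s) ^ (-(d : ℝ)) * exp (-s⁻¹ * ‖x‖ ^ 2) := by
  rw [heatK, mul_pow, ← rpow_mul_natCast (by positivity), ← exp_nat_mul]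
  congr 2
  · push_cast
    ring
  · push_cast
    field_simp

theorem integral_heatK_sq (d : ℕ) (hs : 0 < s) :
    ∫ x, heatK d s x ^ 2 = (4 * π * s) ^ (-(d : ℝ) / 2) := by
  have hcoef : (2 * π * s) ^ (-(d : ℝ)) = (4 * π * s * (π * s)) ^ (-(d : ℝ) / 2) := by
    rw [show 4 * π * s * (π * s) = (2 * π * s) ^ 2 by ring, ← rpow_natCast_mul (by positivity)]
    congr 1
    push_cast
    ring
  simp only [heatK_sq hs, integral_const_mul]
  rw [GaussianFourier.integral_rexp_neg_mul_sq_norm (inv_pos.2 hs), finrank_euclideanSpace_fin,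
    div_inv_eq_mul, hcoef, mul_rpow (by positivity) (by positivity), mul_assoc,
    ← rpow_add (by positivity), neg_div, neg_add_cancel, rpow_zero, mul_one]

theorem eLpNorm_two_heatK (d : ℕ) (hs : 0 < s) :
    eLpNorm (heatK d s) 2 volume = ENNReal.ofReal ((4 * π * s) ^ (-(d : ℝ) / 4)) := by
  have hmeas : Measurable (heatK d s) :=
    (measurable_heatK_uncurry d).comp (measurable_id.prodMk measurable_const)
  have hmem : MemLp (heatK d s) 2 volume := by
    refine (memLp_two_iff_integrable_sq hmeas.aestronglyMeasurable).2 (.of_integral_ne_zero ?_)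
    rw [integral_heatK_sq d hs]
    positivity
  rw [hmem.eLpNorm_eq_integral_rpow_norm two_ne_zero ENNReal.ofNat_ne_top]
  simp only [ENNReal.toReal_ofNat, rpow_two, norm_eq_abs, sq_abs]
  rw [integral_heatK_sq d hs, ← rpow_mul (by positivity)]
  congr 2
  ring

theorem lintegral_eLpNorm_two_heatK_mul_lt_top (hd : d < 4) (ht : 0 < t) :
    ∫⁻ s in Ioi 0, eLpNorm (fun x => heatK d s x * brownianTimeDensity t s) 2 volume < ⊤ := by
  have hexp : -1 < -(d : ℝ) / 4 := by
    have : (d : ℝ) < 4 := by exact_mod_cast hd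
    linarith
  have hint := (integrableOn_rpow_mul_exp_neg_mul_sq (b := (2 * t)⁻¹) (by positivity)
    hexp).const_mul ((4 * π) ^ (-(d : ℝ) / 4) * (2 * π * t) ^ (-(1 : ℝ) / 2))
  refine lt_of_eq_of_lt (setLIntegral_congr_fun measurableSet_Ioi fun s (hs : 0 < s) => ?_)
    hint.lintegral_lt_top
  have hsmul : (fun x => heatK d s x * brownianTimeDensity t s) =
      brownianTimeDensity t s • heatK d s := by
    ext x
    exact mul_comm _ _
  rw [hsmul, eLpNorm_const_smul, eLpNorm_two_heatK d hs,
    enorm_of_nonneg (brownianTimeDensity_pos ht s).le,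
    ← ENNReal.ofReal_mul (brownianTimeDensity_pos ht s).le, brownianTimeDensity,
    mul_rpow (by positivity) hs.le, neg_div (2 * t), div_eq_inv_mul (s ^ 2), ← neg_mul]
  congr 1
  ring

theorem stronglyMeasurable_heatK_mul_brownianTimeDensity (d : ℕ) (t : ℝ) :
    StronglyMeasurable (Function.uncurry
      fun (x : EuclideanSpace ℝ (Fin d)) s => heatK d s x * brownianTimeDensity t s) :=
  ((measurable_heatK_uncurry d).mul
    ((measurable_brownianTimeDensity t).comp measurable_snd)).stronglyMeasurable

theorem memLp_two_btbmK (hd : d < 4) (ht : 0 < t) : MemLp (btbmK d t) 2 volume :=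
  (memLp_two_integral_prod_right (stronglyMeasurable_heatK_mul_brownianTimeDensity d t)
    (lintegral_eLpNorm_two_heatK_mul_lt_top hd ht)).const_mul 2

/-- Only almost everywhere: at `x = 0` the time integral diverges for `d ≥ 2`, so that
`btbmK d t 0 = 0`. -/
theorem ae_btbmK_pos (hd : d < 4) (ht : 0 < t) : ∀ᵐ x, 0 < btbmK d t x := by
  filter_upwards [ae_integrable_of_lintegral_eLpNorm_two_lt_top
    (stronglyMeasurable_heatK_mul_brownianTimeDensity d t)
    (lintegral_eLpNorm_two_heatK_mul_lt_top hd ht)] with x hx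
  have : NeZero (volume.restrict (Ioi (0 : ℝ))) := ⟨by simp⟩
  refine mul_pos two_pos (integral_pos_of_ae_pos hx ?_)
  filter_upwards [ae_restrict_mem measurableSet_Ioi] with s hs
  exact mul_pos (heatK_pos hs x) (brownianTimeDensity_pos ht s)

theorem integral_btbmK_sq_pos (hd : d < 4) (ht : 0 < t) : 0 < ∫ x, btbmK d t x ^ 2 :=
  integral_pos_of_ae_pos (memLp_two_btbmK hd ht).integrable_sq
    ((ae_btbmK_pos hd ht).mono fun _ hx => pow_pos hx 2)

end Kernels

theorem btbmK_sq_integral (d : ℕ) (hd : d ∈ ({1, 2, 3} : Set ℕ)) :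
    ∃ C : ℝ, 0 < C ∧ ∀ t : ℝ, 0 < t →
      ∫ x : EuclideanSpace ℝ (Fin d), (btbmK d t x)^2 = C * t ^ (-(d : ℝ)/4) := by
  have hd4 : d < 4 := by
    simp only [mem_insert_iff, mem_singleton_iff] at hd
    omega
  exact ⟨∫ x, btbmK d 1 x ^ 2, integral_btbmK_sq_pos hd4 one_pos,
    fun _ ht => integral_btbmK_sq_eq d ht⟩
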